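/- Assume hypothesis (H). Then there exist δ₀ ∈ (0,1) and, for each δ ∈ (0,δ₀), a constant C ∈ ℝ such that for every ε ∈ (−δ, −δ/2) and every u ∈ C¹(closed 𝔻) satisfying ∫_{∂𝔻} e^{u/2} = 1 and ∫_{∂𝔻} x₁ e^{u/2} = ∫_{∂𝔻} x₂ e^{u/2} = 0, one has I_ε(u) ≥ (1/5)∫_𝔻 |∇u|² + C. In particular I_ε is bounded from below on this constrained set, uniformly for ε ∈ (−δ, −δ/2). -/

import Mathlib

open MeasureTheory Real Filter

noncomputable section

/-- The open unit disk in ℝ² ≅ ℂ. -/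
def unitDisk : Set ℂ := Metric.ball 0 1

/-- The unit circle ∂𝔻. -/
def unitCircle : Set ℂ := Metric.sphere 0 1

/-- The closed unit disk. -/
def closedUnitDisk : Set ℂ := Metric.closedBall 0 1

/-- Directional derivative of `u` at `x` in direction `v`. -/
def pd (u : ℂ → ℝ) (v x : ℂ) : ℝ := fderiv ℝ u x v

/-- Laplacian of `u` at `x`. -/
def lap (u : ℂ → ℝ) (x : ℂ) : ℝ :=
  fderiv ℝ (fun y => pd u 1 y) x 1 + fderiv ℝ (fun y => pd u Complex.I y) x Complex.I

/-- Squared norm of the gradient, |∇u|². -/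
def gradSq (u : ℂ → ℝ) (x : ℂ) : ℝ := pd u 1 x ^ 2 + pd u Complex.I x ^ 2

/-- Outward normal derivative ∂_ν u(x) = ∇u(x)·x at a boundary point. -/
def nderiv (u : ℂ → ℝ) (x : ℂ) : ℝ := x.re * pd u 1 x + x.im * pd u Complex.I x

/-- Tangential derivative ∂_τ u(x) = ∇u(x)·(−x₂,x₁) at a boundary point. -/
def tderiv (u : ℂ → ℝ) (x : ℂ) : ℝ := -x.im * pd u 1 x + x.re * pd u Complex.I x

/-- Unit-speed parametrization of the unit circle. -/
def bpt (θ : ℝ) : ℂ := Complex.exp ((θ : ℂ) * Complex.I)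

/-- Integral over ∂𝔻 with respect to arclength. -/
def bint (f : ℂ → ℝ) : ℝ := ∫ θ in (0:ℝ)..(2 * π), f (bpt θ)

/-- A solution of the prescribed curvature problem for `(K, h)`. -/
def IsSolution (K h u : ℂ → ℝ) : Prop :=
  ContDiff ℝ 2 u ∧
  (∀ x ∈ unitDisk, -lap u x = 2 * K x * Real.exp (u x)) ∧
  (∀ x ∈ unitCircle, nderiv u x + 2 = 2 * h x * Real.exp (u x / 2))

/-- The auxiliary function Φ = H + √(H² + K). -/
def Phi (K H : ℂ → ℝ) (x : ℂ) : ℝ := H x + Real.sqrt (H x ^ 2 + K x)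

/-- `H` is the harmonic extension of `h`, C¹ up to the boundary. -/
def IsHarmExt (h H : ℂ → ℝ) : Prop :=
  ContDiff ℝ 1 H ∧ ContDiffOn ℝ 2 H unitDisk ∧
  (∀ x ∈ unitDisk, lap H x = 0) ∧ ∀ x ∈ unitCircle, H x = h x

/-- K_ε. -/
def Keps (K : ℂ → ℝ) (ε : ℝ) (x : ℂ) : ℝ := (K x - ε / 2) / (1 + ε)

/-- h_ε. -/
def heps (h : ℂ → ℝ) (ε : ℝ) (x : ℂ) : ℝ := h x / (1 + ε)

/-- K̃_ε. -/
def Ktil (ε : ℝ) : ℝ := -ε / (2 * (1 + ε))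

/-- h̃_ε. -/
def htil (ε : ℝ) : ℝ := 1 / (1 + ε)

/-- A solution of the perturbed problem (P_ε). -/
def IsPerturbedSolution (K h : ℂ → ℝ) (ε : ℝ) (u : ℂ → ℝ) : Prop :=
  ContDiff ℝ 2 u ∧
  (∀ x ∈ unitDisk, -lap u x + 2 * Ktil ε = 2 * Keps K ε x * Real.exp (u x)) ∧
  (∀ x ∈ unitCircle, nderiv u x + 2 * htil ε = 2 * heps h ε x * Real.exp (u x / 2))

/-- The energy functional I. -/
def Ifun (K h u : ℂ → ℝ) : ℝ :=
  (∫ x in unitDisk, ((1/2) * gradSq u x - 2 * K x * Real.exp (u x))) +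
  bint (fun x => 2 * u x - 4 * h x * Real.exp (u x / 2))

/-- The perturbation term T. -/
def Tfun (u : ℂ → ℝ) : ℝ :=
  ∫ x in unitDisk, ((1/2) * gradSq u x + Real.exp (u x) - u x)

/-- The perturbed functional I_ε. -/
def Ieps (K h : ℂ → ℝ) (ε : ℝ) (u : ℂ → ℝ) : ℝ := (Ifun K h u + ε * Tfun u) / (1 + ε)

lemma exp_coeff (N : ℕ) (a : ℕ → ℂ) : ∃ b : ℤ → ℂ, (∀ m < 0, b m = 0) ∧ b 0 = 1 ∧
    (∀ m : ℤ, (m:ℂ) * b m = ∑ k ∈ Finset.Icc 1 N, (k:ℂ) * a k * b (m - k)) ∧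
    ∀ z : ℂ, HasSum (fun n : ℕ => b n * z^n)
      (Complex.exp (∑ k ∈ Finset.Icc 1 N, a k * z^k)) := by
  set g : ℂ → ℂ := fun z => Complex.exp (∑ k ∈ Finset.Icc 1 N, a k * z^k) with hg
  have hgd : Differentiable ℂ g := by fun_prop
  have hgc : ∀ n : ℕ, ContDiff ℂ n g := fun n => by fun_prop
  have hder : deriv g = fun z => ∑ k ∈ Finset.Icc 1 N, ((k:ℂ) * a k) * (z^(k-1) * g z) := by
    funext z
    have h1 : HasDerivAt g (Complex.exp (∑ k ∈ Finset.Icc 1 N, a k * z^k) *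
        (∑ k ∈ Finset.Icc 1 N, a k * ((k:ℂ) * z^(k-1)))) z := by
      apply HasDerivAt.cexp
      apply HasDerivAt.fun_sum
      intro i _
      exact (hasDerivAt_pow i z).const_mul _
    rw [h1.deriv, Finset.mul_sum]
    refine Finset.sum_congr rfl fun k _ => ?_
    simp only [hg]; ring
  have hmono : ∀ n j : ℕ, iteratedDeriv n (fun z => z^j * g z) 0 =
      if j ≤ n then (n.choose j : ℂ) * (j.factorial : ℂ) * iteratedDeriv (n - j) g 0 else 0 := by
    intro n j
    have := iteratedDeriv_fun_mul (n := n) (x := (0:ℂ)) (f := fun z : ℂ => z^j) (g := g)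
      (by fun_prop) ((hgc n).contDiffAt)
    rw [this]
    simp only [iteratedDeriv_fun_pow_zero]
    split_ifs with h
    · rw [Finset.sum_eq_single j]
      · simp
      · intro b _ hb; simp [hb]
      · intro hj; exact absurd (Finset.mem_range.2 (by omega)) hj
    · apply Finset.sum_eq_zero
      intro i hi
      have : i ≠ j := by have := Finset.mem_range.1 hi; omega
      simp [this]
  have hrec : ∀ n : ℕ, iteratedDeriv (n+1) g 0 = ∑ k ∈ Finset.Icc 1 N, ((k:ℂ) * a k) *
      (if k - 1 ≤ n then (n.choose (k-1) : ℂ) * ((k-1).factorial : ℂ) *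
        iteratedDeriv (n - (k-1)) g 0 else 0) := by
    intro n
    rw [iteratedDeriv_succ', hder, iteratedDeriv_fun_sum]
    · refine Finset.sum_congr rfl fun k _ => ?_
      rw [iteratedDeriv_const_mul_field, hmono]
    · intro i _
      have := hgc n
      fun_prop
  refine ⟨fun m => if m < 0 then 0 else iteratedDeriv m.toNat g 0 / (m.toNat.factorial : ℂ),
    ?_, ?_, ?_, ?_⟩
  · intro m hm; simp [hm]
  · have : ∑ k ∈ Finset.Icc 1 N, a k * (0:ℂ)^k = 0 := ?_
    · simp [hg, this]
    apply Finset.sum_eq_zero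
    intro i hi
    have : i ≠ 0 := by have := Finset.mem_Icc.1 hi; omega
    simp [this]
  · intro m
    beta_reduce
    rcases lt_trichotomy m 0 with hm | hm | hm
    · rw [if_pos hm, mul_zero, eq_comm]
      apply Finset.sum_eq_zero
      intro k hk
      rw [if_pos (by omega), mul_zero]
    · subst hm
      simp only [Int.cast_zero, zero_mul]
      rw [eq_comm]
      apply Finset.sum_eq_zero
      intro k hk
      rw [if_pos (by have := Finset.mem_Icc.1 hk; omega), mul_zero]
    · obtain ⟨n, rfl⟩ : ∃ n : ℕ, m = (n:ℤ) + 1 := ⟨(m-1).toNat, by omega⟩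
      have e1 : ((n:ℤ)+1).toNat = n + 1 := by omega
      rw [if_neg (by omega), e1, hrec, Finset.sum_div, Finset.mul_sum]
      refine Finset.sum_congr rfl fun k hk => ?_
      have hk := Finset.mem_Icc.1 hk
      by_cases hkn : k - 1 ≤ n
      · rw [if_pos hkn, if_neg (by omega)]
        have e2 : ((n:ℤ)+1-k).toNat = n - (k-1) := by omega
        rw [e2]
        have hf := Nat.choose_mul_factorial_mul_factorial hkn
        have hf' : (n.choose (k-1) : ℂ) * ((k-1).factorial : ℂ) * ((n-(k-1)).factorial : ℂ) =
          (n.factorial : ℂ) := by exact_mod_cast hf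
        rw [Nat.factorial_succ]
        have h3 : ((n-(k-1)).factorial : ℂ) ≠ 0 := by exact_mod_cast Nat.factorial_ne_zero _
        have h4 : ((k-1).factorial : ℂ) ≠ 0 := by exact_mod_cast Nat.factorial_ne_zero _
        have h5 : (n.factorial : ℂ) ≠ 0 := by exact_mod_cast Nat.factorial_ne_zero _
        have h6 : (n : ℂ) + 1 ≠ 0 := by exact_mod_cast Nat.succ_ne_zero n
        push_cast
        field_simp
        rw [← hf']; ring
      · rw [if_neg hkn, if_pos (by omega)]; simp
  · intro z
    have := Complex.hasSum_taylorSeries_of_entire hgd 0 z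
    have e : (fun n : ℕ => (if (n:ℤ) < 0 then 0 else
        iteratedDeriv (n:ℤ).toNat g 0 / ((n:ℤ).toNat.factorial : ℂ)) * z^n) =
        fun n : ℕ => (n.factorial : ℂ)⁻¹ • (z - 0) ^ n • iteratedDeriv n g 0 := by
      funext n
      have : ¬ ((n:ℤ) < 0) := by omega
      simp only [this, if_false, Int.toNat_natCast, sub_zero, smul_eq_mul]
      ring
    exact e ▸ this

lemma pair_sum (m : ℤ) (hm : 0 ≤ m) (G : ℤ → ℂ) (hG : ∑ i ∈ Finset.Icc 0 m, G i = 0) (N : ℕ) :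
    ∑ k ∈ Finset.Icc 1 N, ∑ i ∈ Finset.Icc (0:ℤ) (m - k), ‖G (i + k) + G i‖^2 ≤
      ((m:ℝ) - 1) * ∑ i ∈ Finset.Icc 0 m, ‖G i‖^2 := by
  set S := Finset.Icc (0:ℤ) m with hS
  set f : ℤ → ℤ → ℝ := fun i l => ‖G l + G i‖^2 with hf
  have h1 : ∑ k ∈ Finset.Icc 1 N, ∑ i ∈ Finset.Icc (0:ℤ) (m - k), ‖G (i + k) + G i‖^2 ≤
      ∑ i ∈ S, ∑ l ∈ S, if i < l then f i l else 0 := by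
    rw [Finset.sum_sigma', ← Finset.sum_product', ← Finset.sum_filter]
    rw [show (∑ x ∈ (Finset.Icc 1 N).sigma (fun k : ℕ => Finset.Icc (0:ℤ) (m-k)),
      ‖G (x.snd + x.fst) + G x.snd‖^2) =
      ∑ x ∈ ((Finset.Icc 1 N).sigma (fun k : ℕ => Finset.Icc (0:ℤ) (m-k))).image
        (fun x => (x.snd, x.snd + (x.fst:ℤ))), f x.1 x.2 from ?_]
    · apply Finset.sum_le_sum_of_subset_of_nonneg
      · intro x hx
        simp only [Finset.mem_image, Finset.mem_sigma, Finset.mem_Icc] at hx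
        obtain ⟨⟨k, i⟩, ⟨h1, h2⟩, rfl⟩ := hx
        simp only [hS, Finset.mem_filter, Finset.mem_product, Finset.mem_Icc]
        dsimp only at h1 h2 ⊢
        omega
      · intro _ _ _; positivity
    · rw [Finset.sum_image]
      rintro ⟨k, i⟩ _ ⟨k', i'⟩ _ h
      simp only [Prod.mk.injEq] at h
      obtain ⟨rfl, h2⟩ := h
      have : k = k' := by omega
      subst this; rfl
  have h2 : ∑ i ∈ S, ∑ l ∈ S, f i l = 2 * (∑ i ∈ S, ∑ l ∈ S, if i < l then f i l else 0)
      + 4 * ∑ i ∈ S, ‖G i‖^2 := by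
    have e1 : ∀ i ∈ S, ∀ l ∈ S, f i l = (if i < l then f i l else 0) + (if l < i then f l i else 0)
        + (if i = l then f i l else 0) := by
      intro i _ l _
      rcases lt_trichotomy i l with h | h | h
      · simp [h, h.not_gt, h.ne]
      · simp [h]
      · simp [h, h.not_gt, h.ne', hf, add_comm]
    rw [Finset.sum_congr rfl fun i hi => Finset.sum_congr rfl (e1 i hi)]
    simp only [Finset.sum_add_distrib]
    rw [Finset.sum_comm (f := fun i l => if l < i then f l i else 0)]
    have : ∑ i ∈ S, ∑ l ∈ S, (if i = l then f i l else 0) = 4 * ∑ i ∈ S, ‖G i‖^2 := by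
      rw [Finset.mul_sum]
      refine Finset.sum_congr rfl fun i hi => ?_
      rw [Finset.sum_ite_eq, if_pos hi]
      simp only [hf]
      rw [← two_mul, norm_mul]; norm_num; ring
    rw [this]; ring
  have h3 : ∑ i ∈ S, ∑ l ∈ S, f i l = 2 * ((m:ℝ)+1) * ∑ i ∈ S, ‖G i‖^2 := by
    have hc : (S.card : ℝ) = (m:ℝ) + 1 := by
      rw [hS, Int.card_Icc]
      have : (((m + 1 - 0).toNat : ℤ) : ℝ) = ((m+1 : ℤ) : ℝ) := by
        congr 1; omega
      exact_mod_cast this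
    have e : ∀ i l, f i l = ‖G l‖^2 + ‖G i‖^2 + 2 * (G l * (starRingEnd ℂ) (G i)).re := by
      intro i l
      simp only [hf, ← Complex.normSq_eq_norm_sq, Complex.normSq_add]
    simp only [e, Finset.sum_add_distrib, Finset.sum_const, ← Finset.mul_sum, ← Complex.re_sum,
      ← Finset.sum_mul, hG, nsmul_eq_mul, hc]
    simp
    ring
  nlinarith [h1, h2, h3]

lemma row_ineq (N : ℕ) (a : ℕ → ℂ) (F : ℤ → ℤ → ℂ) (hF1 : ∀ i j, i < 0 → F i j = 0)
    (hF2 : ∀ i j, j < 0 → F i j = 0) (hanti : ∀ i j, F j i = - F i j)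
    (hrec : ∀ i j : ℤ, ((i:ℂ) + j - 1) * F i j =
      ∑ k ∈ Finset.Icc 1 N, (k:ℂ) * a k * (F (i - k) j + F i (j - k))) (m : ℤ) (hm : 0 ≤ m) :
    ((m:ℝ) - 1) * ∑ i ∈ Finset.Icc 0 m, ‖F i (m - i)‖^2 ≤
      ∑ k ∈ Finset.Icc 1 N, (k:ℝ)^2 * ‖a k‖^2 *
        ∑ i ∈ Finset.Icc (0:ℤ) (m - k), ‖F i (m - k - i)‖^2 := by
  set G : ℤ → ℂ := fun i => F i (m - i) with hGdef
  have hG : ∑ i ∈ Finset.Icc 0 m, G i = 0 := by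
    have : ∑ i ∈ Finset.Icc 0 m, G i = ∑ i ∈ Finset.Icc 0 m, - G i := by
      apply Finset.sum_bij' (fun i _ => m - i) (fun i _ => m - i)
      · intro i hi; simp only [Finset.mem_Icc] at *; omega
      · intro i hi; simp only [Finset.mem_Icc] at *; omega
      · intro i _; ring
      · intro i _; ring
      · intro i _
        simp only [hGdef]
        rw [hanti, sub_sub_cancel]
    rw [Finset.sum_neg_distrib] at this
    exact self_eq_neg.1 this
  have hp := pair_sum m hm G hG N
  have key : ((m:ℝ) - 1) * ∑ i ∈ Finset.Icc 0 m, ‖G i‖^2 =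
      ∑ k ∈ Finset.Icc 1 N, ∑ i ∈ Finset.Icc (0:ℤ) (m - k),
        ((k:ℂ) * a k * F i (m - k - i) * (starRingEnd ℂ) (G (i + k) + G i)).re := by
    have h1 : (((m:ℝ) - 1 : ℝ) : ℂ) * ∑ i ∈ Finset.Icc 0 m, G i * (starRingEnd ℂ) (G i) =
      ∑ k ∈ Finset.Icc 1 N, ∑ i ∈ Finset.Icc (0:ℤ) (m - k),
        ((k:ℂ) * a k * F i (m - k - i) * (starRingEnd ℂ) (G (i + k) + G i)) := by
      have h2 : ∀ i ∈ Finset.Icc (0:ℤ) m, (((m:ℝ) - 1 : ℝ) : ℂ) * (G i * (starRingEnd ℂ) (G i)) =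
          ∑ k ∈ Finset.Icc 1 N, ((k:ℂ) * a k * (F (i-k) (m-i) * (starRingEnd ℂ) (G i)) +
            (k:ℂ) * a k * (F i (m-i-k) * (starRingEnd ℂ) (G i))) := by
        intro i _
        have := hrec i (m-i)
        have e : ((i:ℂ) + ((m - i : ℤ):ℂ) - 1) = (((m:ℝ) - 1 : ℝ) : ℂ) := by push_cast; ring
        rw [e] at this
        rw [← mul_assoc]
        simp only [hGdef]
        rw [this, Finset.sum_mul]
        refine Finset.sum_congr rfl fun k _ => ?_
        ring
      rw [Finset.mul_sum, Finset.sum_congr rfl h2, Finset.sum_comm]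
      refine Finset.sum_congr rfl fun k _ => ?_
      rw [Finset.sum_add_distrib]
      have hA : ∑ i ∈ Finset.Icc (0:ℤ) m, (k:ℂ) * a k * (F (i-k) (m-i) * (starRingEnd ℂ) (G i)) =
          ∑ i ∈ Finset.Icc (0:ℤ) (m-k), (k:ℂ) * a k * (F i (m-k-i) * (starRingEnd ℂ) (G (i+k))) := by
        have : ∑ i ∈ Finset.Icc (0:ℤ) (m-k),
            (k:ℂ) * a k * (F i (m-k-i) * (starRingEnd ℂ) (G (i+k))) =
            ∑ i ∈ Finset.Icc (k:ℤ) m, (k:ℂ) * a k * (F (i-k) (m-i) * (starRingEnd ℂ) (G i)) := by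
          apply Finset.sum_bij' (fun (i:ℤ) _ => i + (k:ℤ)) (fun (i:ℤ) _ => i - (k:ℤ))
          · intro i hi; simp only [Finset.mem_Icc] at *; omega
          · intro i hi; simp only [Finset.mem_Icc] at *; omega
          · intro i _; ring
          · intro i _; ring
          · intro i _
            rw [show i + (k:ℤ) - k = i by ring, show m - (i + (k:ℤ)) = m - k - i by ring]
        rw [this]
        symm
        apply Finset.sum_subset
        · intro i hi; simp only [Finset.mem_Icc] at *; omega
        · intro i hi hi'
          simp only [Finset.mem_Icc] at *
          rw [hF1 _ _ (by omega)]; simp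
      have hB : ∑ i ∈ Finset.Icc (0:ℤ) m, (k:ℂ) * a k * (F i (m-i-k) * (starRingEnd ℂ) (G i)) =
          ∑ i ∈ Finset.Icc (0:ℤ) (m-k), (k:ℂ) * a k * (F i (m-k-i) * (starRingEnd ℂ) (G i)) := by
        symm
        have : ∀ i : ℤ, m - k - i = m - i - k := fun i => by ring
        simp only [this]
        apply Finset.sum_subset
        · intro i hi; simp only [Finset.mem_Icc] at *; omega
        · intro i hi hi'
          simp only [Finset.mem_Icc] at *
          rw [hF2 _ _ (by omega)]; simp
      rw [hA, hB, ← Finset.sum_add_distrib]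
      refine Finset.sum_congr rfl fun i _ => ?_
      rw [map_add]; ring
    have h3 := congrArg Complex.re h1
    simp only [Complex.re_sum] at h3
    rw [← h3]
    simp only [Complex.mul_conj, ← Complex.ofReal_sum, ← Complex.ofReal_mul, Complex.ofReal_re,
      Complex.normSq_eq_norm_sq]
  have hle : ∑ k ∈ Finset.Icc 1 N, ∑ i ∈ Finset.Icc (0:ℤ) (m - k),
        ((k:ℂ) * a k * F i (m - k - i) * (starRingEnd ℂ) (G (i + k) + G i)).re ≤
      ∑ k ∈ Finset.Icc 1 N, ∑ i ∈ Finset.Icc (0:ℤ) (m - k),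
        (1/2 * ((k:ℝ)^2 * ‖a k‖^2 * ‖F i (m-k-i)‖^2) + 1/2 * ‖G (i+k) + G i‖^2) := by
    refine Finset.sum_le_sum fun k _ => Finset.sum_le_sum fun i _ => ?_
    refine (Complex.re_le_norm _).trans ?_
    rw [norm_mul, norm_mul, norm_mul, Complex.norm_conj, Complex.norm_natCast]
    nlinarith [sq_nonneg ((k:ℝ) * ‖a k‖ * ‖F i (m-k-i)‖ - ‖G (i+k) + G i‖)]
  simp only [Finset.sum_add_distrib, ← Finset.mul_sum] at hle
  rw [← key] at hle
  linarith

lemma coeff_bound (N : ℕ) (a : ℕ → ℂ) (b : ℤ → ℂ) (hb : ∀ m < 0, b m = 0) (hb0 : b 0 = 1)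
    (hrec : ∀ m : ℤ, (m:ℂ) * b m = ∑ k ∈ Finset.Icc 1 N, (k:ℂ) * a k * b (m - k)) (M : ℕ) :
    ∑ i ∈ Finset.range M, ∑ j ∈ Finset.range M,
      ‖b ((i:ℤ)-1) * b j - b i * b ((j:ℤ)-1)‖^2 ≤
      2 * Real.exp (∑ k ∈ Finset.Icc 1 N, (k:ℝ) * ‖a k‖^2) := by
  set F : ℤ → ℤ → ℂ := fun i j => b (i-1) * b j - b i * b (j-1) with hF
  set P : ℤ → ℝ := fun m => ∑ i ∈ Finset.Icc 0 m, ‖F i (m - i)‖^2 with hP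
  have hrow : ∀ m : ℤ, 0 ≤ m → ((m:ℝ) - 1) * P m ≤
      ∑ k ∈ Finset.Icc 1 N, (k:ℝ)^2 * ‖a k‖^2 * P (m - k) := by
    intro m hm
    apply row_ineq N a F _ _ _ _ m hm
    · intro i j hi; simp [hF, hb i hi, hb (i-1) (by omega)]
    · intro i j hi; simp [hF, hb j hi, hb (j-1) (by omega)]
    · intro i j; simp only [hF]; ring
    · intro i j
      have e1 : ∀ k : ℕ, (k:ℂ) * a k * (F (i-k) j + F i (j-k)) =
          ((k:ℂ) * a k * b (i - 1 - k)) * b j - ((k:ℂ) * a k * b (i-k)) * b (j-1) +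
          (((k:ℂ) * a k * b (j-k)) * b (i-1) - ((k:ℂ) * a k * b (j-1-k)) * b i) := by
        intro k
        simp only [hF]
        rw [show i - (k:ℤ) - 1 = i - 1 - k by ring, show j - (k:ℤ) - 1 = j - 1 - k by ring]
        ring
      simp only [e1, Finset.sum_add_distrib, Finset.sum_sub_distrib, ← Finset.sum_mul, ← hrec]
      simp only [hF]
      push_cast
      ring
  obtain ⟨c, hc, hc0, hcrec, hcsum⟩ := exp_coeff N (fun k => (((k:ℝ) * ‖a k‖^2 : ℝ) : ℂ))
  have hcpos : ∀ n : ℕ, (c n).im = 0 ∧ 0 ≤ (c n).re ∧ P (n+1) ≤ 2 * (c n).re := by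
    intro n
    induction n using Nat.strong_induction_on with
    | _ n ih =>
    have hext : ∀ m : ℤ, m < n → (c m).im = 0 ∧ 0 ≤ (c m).re ∧ P (m+1) ≤ 2 * (c m).re := by
      intro m hmn
      by_cases h : m < 0
      · have : P (m+1) = 0 := by
          simp only [hP]
          apply Finset.sum_eq_zero
          intro i hi
          simp only [Finset.mem_Icc] at hi
          have h1 : i = 0 := by omega
          have h2 : m + 1 - i = 0 := by omega
          rw [h1] at h2 ⊢
          rw [h2]
          simp [hF, hb (-1)]
        rw [hc m h, this]; simp
      · obtain ⟨l, rfl⟩ : ∃ l : ℕ, m = l := ⟨m.toNat, by omega⟩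
        exact ih l (by omega)
    rcases Nat.eq_zero_or_pos n with rfl | hn
    · simp only [Nat.cast_zero, hc0]
      refine ⟨by simp, by simp, ?_⟩
      have : Finset.Icc (0:ℤ) (0+1) = {0, 1} := by decide
      simp only [hP, this, hF]
      rw [Finset.sum_pair (by norm_num)]
      simp [hb (-1), hb0]
      norm_num
    · have hr := hcrec n
      have hn' : (0:ℝ) < n := by exact_mod_cast hn
      have hre : (n:ℝ) * (c n).re = ∑ k ∈ Finset.Icc 1 N, (k:ℝ)^2 * ‖a k‖^2 * (c (n-k)).re := by
        have := congrArg Complex.re hr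
        rw [Complex.re_sum] at this
        have e : (((n:ℤ):ℂ) * c n).re = (n:ℝ) * (c n).re := by
          rw [show (((n:ℤ)):ℂ) = ((n:ℝ):ℂ) by push_cast; rfl, Complex.re_ofReal_mul]
        rw [e] at this
        rw [this]
        refine Finset.sum_congr rfl fun k _ => ?_
        rw [show ((k:ℂ) * (((k:ℝ) * ‖a k‖^2 : ℝ) : ℂ)) = (((k:ℝ)^2 * ‖a k‖^2 : ℝ) : ℂ) by
          push_cast; ring, Complex.re_ofReal_mul]
      have him : (n:ℝ) * (c n).im = ∑ k ∈ Finset.Icc 1 N, (k:ℝ)^2 * ‖a k‖^2 * (c (n-k)).im := by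
        have := congrArg Complex.im hr
        rw [Complex.im_sum] at this
        have e : (((n:ℤ):ℂ) * c n).im = (n:ℝ) * (c n).im := by
          rw [show (((n:ℤ)):ℂ) = ((n:ℝ):ℂ) by push_cast; rfl, Complex.im_ofReal_mul]
        rw [e] at this
        rw [this]
        refine Finset.sum_congr rfl fun k _ => ?_
        rw [show ((k:ℂ) * (((k:ℝ) * ‖a k‖^2 : ℝ) : ℂ)) = (((k:ℝ)^2 * ‖a k‖^2 : ℝ) : ℂ) by
          push_cast; ring, Complex.im_ofReal_mul]
      have hlt : ∀ k ∈ Finset.Icc 1 N, (n:ℤ) - (k:ℤ) < n := by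
        intro k hk
        simp only [Finset.mem_Icc] at hk
        omega
      refine ⟨?_, ?_, ?_⟩
      · have : (n:ℝ) * (c n).im = 0 := by
          rw [him]
          apply Finset.sum_eq_zero
          intro k hk
          rw [(hext _ (hlt k hk)).1, mul_zero]
        exact (mul_eq_zero.1 this).resolve_left hn'.ne'
      · have : 0 ≤ (n:ℝ) * (c n).re := by
          rw [hre]
          apply Finset.sum_nonneg
          intro k hk
          have := (hext _ (hlt k hk)).2.1
          positivity
        exact nonneg_of_mul_nonneg_right this hn'
      · have h1 := hrow (n+1) (by omega)
        have h2 : ∑ k ∈ Finset.Icc 1 N, (k:ℝ)^2 * ‖a k‖^2 * P ((n:ℤ)+1 - k) ≤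
            ∑ k ∈ Finset.Icc 1 N, (k:ℝ)^2 * ‖a k‖^2 * (2 * (c (n-k)).re) := by
          refine Finset.sum_le_sum fun k hk => ?_
          have := (hext _ (hlt k hk)).2.2
          rw [show (n:ℤ) - k + 1 = n + 1 - k by ring] at this
          gcongr
        have h3 : ∑ k ∈ Finset.Icc 1 N, (k:ℝ)^2 * ‖a k‖^2 * (2 * (c (n-k)).re) =
            2 * ((n:ℝ) * (c n).re) := by
          rw [hre, Finset.mul_sum]
          refine Finset.sum_congr rfl fun k _ => ?_
          ring
        have h4 : (n:ℝ) * P (n+1) ≤ n * (2 * (c n).re) := by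
          push_cast at h1
          have : ((n:ℝ) + 1 - 1) * P (n+1) = n * P (n+1) := by ring
          linarith
        exact le_of_mul_le_mul_left h4 hn'
  -- sum of P
  have hPsum : ∀ L : ℕ, ∑ n ∈ Finset.range L, P (n+1) ≤
      2 * Real.exp (∑ k ∈ Finset.Icc 1 N, (k:ℝ) * ‖a k‖^2) := by
    intro L
    have hs := hcsum 1
    simp only [one_pow, mul_one, ← Complex.ofReal_sum, ← Complex.ofReal_exp] at hs
    have hs' := Complex.hasSum_re hs
    rw [Complex.ofReal_re] at hs'
    have : ∑ n ∈ Finset.range L, (c n).re ≤ Real.exp (∑ k ∈ Finset.Icc 1 N, (k:ℝ) * ‖a k‖^2) :=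
      sum_le_hasSum _ (fun i _ => (hcpos i).2.1) hs'
    calc _ ≤ ∑ n ∈ Finset.range L, 2 * (c n).re := Finset.sum_le_sum fun n _ => (hcpos n).2.2
      _ ≤ _ := by rw [← Finset.mul_sum]; linarith
  have hPsum' : ∑ n ∈ Finset.range (2*M+1), P n ≤
      2 * Real.exp (∑ k ∈ Finset.Icc 1 N, (k:ℝ) * ‖a k‖^2) := by
    rw [Finset.sum_range_succ']
    have : P ((0:ℕ):ℤ) = 0 := by
      simp [hP, hF, hb (-1)]
    rw [this, add_zero]
    exact_mod_cast hPsum (2*M)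
  refine le_trans ?_ hPsum'
  simp only [hP]
  rw [Finset.sum_sigma' (Finset.range (2*M+1)), ← Finset.sum_product']
  rw [show (∑ x ∈ Finset.range M ×ˢ Finset.range M,
      ‖b ((x.1:ℤ)-1) * b x.2 - b x.1 * b ((x.2:ℤ)-1)‖^2) =
      ∑ x ∈ (Finset.range M ×ˢ Finset.range M).image
        (fun x : ℕ × ℕ => (⟨x.1 + x.2, (x.1 : ℤ)⟩ : (_ : ℕ) × ℤ)),
        ‖F x.2 (x.1 - x.2)‖^2 from ?_]
  · apply Finset.sum_le_sum_of_subset_of_nonneg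
    · intro x hx
      simp only [Finset.mem_image, Finset.mem_product, Finset.mem_range] at hx
      obtain ⟨⟨k, i⟩, ⟨h1, h2⟩, rfl⟩ := hx
      simp only [Finset.mem_sigma, Finset.mem_range, Finset.mem_Icc]
      dsimp only at h1 h2 ⊢
      push_cast
      omega
    · intro _ _ _; positivity
  · rw [Finset.sum_image]
    · refine Finset.sum_congr rfl fun x _ => ?_
      simp only [hF]
      push_cast
      rw [add_sub_cancel_left]
    · rintro ⟨k, i⟩ _ ⟨k', i'⟩ _ h
      simp only [Sigma.mk.injEq, heq_eq_eq] at h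
      ext
      · dsimp only; omega
      · dsimp only; omega

lemma bpt_cont : Continuous bpt := by unfold bpt; fun_prop

lemma bpt_norm (θ : ℝ) : ‖bpt θ‖ = 1 := by unfold bpt; exact Complex.norm_exp_ofReal_mul_I θ

lemma bpt_ortho (n m : ℕ) : ∫ θ in (0:ℝ)..(2*π), bpt θ ^ n * (starRingEnd ℂ) (bpt θ ^ m) =
    if n = m then 2 * (π:ℂ) else 0 := by
  have e : ∀ θ : ℝ, bpt θ ^ n * (starRingEnd ℂ) (bpt θ ^ m) =
      Complex.exp ((((n:ℂ) - m) * Complex.I) * θ) := by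
    intro θ
    unfold bpt
    rw [map_pow, ← Complex.exp_conj, ← Complex.exp_nat_mul, ← Complex.exp_nat_mul, ← Complex.exp_add]
    congr 1
    simp
    ring
  simp only [e]
  split_ifs with h
  · subst h; simp
  · have hc : ((n:ℂ) - m) * Complex.I ≠ 0 := by
      apply mul_ne_zero _ Complex.I_ne_zero
      rw [sub_ne_zero]; exact_mod_cast h
    rw [integral_exp_mul_complex hc]
    have : Complex.exp (((n:ℂ) - m) * Complex.I * ((2*π:ℝ):ℂ)) = 1 := by
      rw [Complex.exp_eq_one_iff]
      refine ⟨(n:ℤ) - m, ?_⟩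
      push_cast; ring
    rw [this]; simp

lemma pars (b : ℕ → ℂ) (g : ℝ → ℂ) (hgc : Continuous g) (hb : Summable fun n => ‖b n‖)
    (hg : ∀ θ, HasSum (fun n => b n * bpt θ ^ n) (g θ)) (l : ℕ) :
    HasSum (fun n => 2 * (π:ℂ) * (b n * (starRingEnd ℂ) (b (n+l))))
      (∫ θ in (0:ℝ)..(2*π), (g θ * (starRingEnd ℂ) (g θ)) * bpt θ ^ l) := by
  have hbc := bpt_cont
  have h1 : ∀ n : ℕ, ∫ θ in (0:ℝ)..(2*π), bpt θ ^ n * (starRingEnd ℂ) (g θ) =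
      2 * (π:ℂ) * (starRingEnd ℂ) (b n) := by
    intro n
    have hs := intervalIntegral.hasSum_integral_of_dominated_convergence (μ := volume)
      (a := (0:ℝ)) (b := 2*π)
      (F := fun m θ => bpt θ ^ n * (starRingEnd ℂ) (b m * bpt θ ^ m))
      (f := fun θ => bpt θ ^ n * (starRingEnd ℂ) (g θ))
      (fun m _ => ‖b m‖)
      (fun m => (by fun_prop : Continuous _).aestronglyMeasurable)
      (fun m => by
        refine Filter.Eventually.of_forall fun θ _ => ?_
        simp [bpt_norm])
      (Filter.Eventually.of_forall fun θ _ => hb)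
      (by simp)
      (Filter.Eventually.of_forall fun θ _ => by
        have := (hg θ).map (starRingEnd ℂ) Complex.continuous_conj
        exact this.mul_left _)
    have e : ∀ m, ∫ θ in (0:ℝ)..(2*π), bpt θ ^ n * (starRingEnd ℂ) (b m * bpt θ ^ m) =
        if m = n then 2 * (π:ℂ) * (starRingEnd ℂ) (b n) else 0 := by
      intro m
      have : ∀ θ, bpt θ ^ n * (starRingEnd ℂ) (b m * bpt θ ^ m) =
          (starRingEnd ℂ) (b m) * (bpt θ ^ n * (starRingEnd ℂ) (bpt θ ^ m)) := by
        intro θ; rw [map_mul]; ring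
      simp only [this]
      rw [intervalIntegral.integral_const_mul, bpt_ortho]
      by_cases h : n = m
      · subst h; simp; ring
      · rw [if_neg h, if_neg (Ne.symm h), mul_zero]
    simp only [e] at hs
    exact hs.unique (hasSum_ite_eq n _)
  have hs := intervalIntegral.hasSum_integral_of_dominated_convergence (μ := volume)
      (a := (0:ℝ)) (b := 2*π)
      (F := fun n θ => b n * bpt θ ^ n * ((starRingEnd ℂ) (g θ) * bpt θ ^ l))
      (f := fun θ => g θ * ((starRingEnd ℂ) (g θ) * bpt θ ^ l))
      (fun m θ => ‖b m‖ * ‖g θ‖)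
      (fun m => (by fun_prop : Continuous _).aestronglyMeasurable)
      (fun m => by
        refine Filter.Eventually.of_forall fun θ _ => ?_
        simp [bpt_norm])
      (Filter.Eventually.of_forall fun θ _ => hb.mul_right _)
      (by
        simp only [tsum_mul_right]
        exact (by fun_prop : Continuous _).intervalIntegrable _ _)
      (Filter.Eventually.of_forall fun θ _ => (hg θ).mul_right _)
  have e : ∀ n, ∫ θ in (0:ℝ)..(2*π), b n * bpt θ ^ n * ((starRingEnd ℂ) (g θ) * bpt θ ^ l) =
      2 * (π:ℂ) * (b n * (starRingEnd ℂ) (b (n+l))) := by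
    intro n
    have : ∀ θ, b n * bpt θ ^ n * ((starRingEnd ℂ) (g θ) * bpt θ ^ l) =
        b n * (bpt θ ^ (n+l) * (starRingEnd ℂ) (g θ)) := by
      intro θ; rw [pow_add]; ring
    simp only [this]
    rw [intervalIntegral.integral_const_mul, h1]; ring
  simp only [e] at hs
  simpa only [mul_assoc] using hs

lemma lm2 (N : ℕ) (a : ℕ → ℂ) (w : ℝ → ℝ)
    (hw : ∀ θ, w θ = 2 * (∑ k ∈ Finset.Icc 1 N, a k * bpt θ ^ k).re) :
    (∫ θ in (0:ℝ)..(2*π), Real.exp (w θ))^2 -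
      ‖∫ θ in (0:ℝ)..(2*π), (Real.exp (w θ) : ℂ) * bpt θ‖^2 ≤
      4 * π^2 * Real.exp (∑ k ∈ Finset.Icc 1 N, (k:ℝ) * ‖a k‖^2) := by
  obtain ⟨b, hb, hb0, hrec, hsum⟩ := exp_coeff N a
  have hbc := bpt_cont
  set g : ℝ → ℂ := fun θ => Complex.exp (∑ k ∈ Finset.Icc 1 N, a k * bpt θ ^ k) with hg
  have hgc : Continuous g := by fun_prop
  have hbs : Summable fun n : ℕ => ‖b n‖ := by
    have := (hsum 1).summable
    simp only [one_pow, mul_one] at this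
    exact this.norm
  have hgg : ∀ θ, g θ * (starRingEnd ℂ) (g θ) = (Real.exp (w θ) : ℂ) := by
    intro θ
    simp only [hg]
    rw [← Complex.exp_conj, ← Complex.exp_add, Complex.add_conj, hw, Complex.ofReal_exp]
  have p0 := pars (fun n : ℕ => b n) g hgc hbs (fun θ => hsum (bpt θ)) 0
  have p1 := pars (fun n : ℕ => b n) g hgc hbs (fun θ => hsum (bpt θ)) 1
  simp only [hgg, pow_zero, mul_one, pow_one, add_zero, intervalIntegral.integral_ofReal] at p0 p1
  set c0 := ∫ θ in (0:ℝ)..(2*π), Real.exp (w θ)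
  set c1 := ∫ θ in (0:ℝ)..(2*π), (Real.exp (w θ) : ℂ) * bpt θ
  have p0' : HasSum (fun n : ℕ => 2 * π * ‖b n‖^2) c0 := by
    have := Complex.hasSum_re p0
    simp only [Complex.ofReal_re] at this
    convert! this using 2 with n
    rw [Complex.mul_conj, Complex.normSq_eq_norm_sq]
    norm_cast
  have t0 := p0'.tendsto_sum_nat
  have t0' := (tendsto_add_atTop_iff_nat 1).2 t0
  have t1 := p1.tendsto_sum_nat
  have hbox : ∀ M : ℕ, (∑ i ∈ Finset.range M, 2 * π * ‖b i‖^2) *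
      (∑ i ∈ Finset.range (M+1), 2 * π * ‖b i‖^2) -
      ‖∑ i ∈ Finset.range M, 2 * (π:ℂ) * (b i * (starRingEnd ℂ) (b ((i+1:ℕ):ℤ)))‖^2 ≤
      4 * π^2 * Real.exp (∑ k ∈ Finset.Icc 1 N, (k:ℝ) * ‖a k‖^2) := by
    intro M
    have hcb := coeff_bound N a b hb hb0 hrec (M+1)
    have e : ∀ i j : ℕ, ‖b ((i:ℤ)-1) * b j - b i * b ((j:ℤ)-1)‖^2 =
        ‖b ((i:ℤ)-1)‖^2 * ‖b j‖^2 + ‖b i‖^2 * ‖b ((j:ℤ)-1)‖^2 -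
        2 * ((b ((i:ℤ)-1) * (starRingEnd ℂ) (b i)) *
          (starRingEnd ℂ) (b ((j:ℤ)-1) * (starRingEnd ℂ) (b j))).re := by
      intro i j
      rw [← Complex.normSq_eq_norm_sq, Complex.normSq_sub, Complex.normSq_eq_norm_sq,
        Complex.normSq_eq_norm_sq, norm_mul, norm_mul, mul_pow, mul_pow]
      congr 3
      simp only [map_mul, Complex.conj_conj]
      ring
    have hA : ∑ i ∈ Finset.range (M+1), ‖b ((i:ℤ)-1)‖^2 = ∑ i ∈ Finset.range M, ‖b i‖^2 := by
      rw [Finset.sum_range_succ']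
      simp [hb (-1)]
    have hX : ∑ i ∈ Finset.range (M+1), b ((i:ℤ)-1) * (starRingEnd ℂ) (b i) =
        ∑ i ∈ Finset.range M, (b i * (starRingEnd ℂ) (b ((i+1:ℕ):ℤ))) := by
      rw [Finset.sum_range_succ']
      simp [hb (-1)]
    simp only [e, Finset.sum_sub_distrib, Finset.sum_add_distrib, ← Finset.mul_sum,
      ← Finset.sum_mul, ← Complex.re_sum, ← map_sum, hA, hX, Complex.mul_conj,
      Complex.normSq_eq_norm_sq] at hcb
    rw [← Finset.mul_sum, ← Finset.mul_sum, ← Finset.mul_sum, norm_mul]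
    have hn : ‖(2 * (π:ℂ))‖ = 2 * π := by
      rw [show (2 * (π:ℂ)) = ((2*π:ℝ):ℂ) by push_cast; rfl, Complex.norm_real,
        Real.norm_of_nonneg (by positivity)]
    rw [hn]
    rw [Complex.ofReal_re] at hcb
    have hpi : 0 ≤ 2 * π^2 := by positivity
    have := mul_le_mul_of_nonneg_left hcb hpi
    nlinarith [this]
  have hlim := (t0.mul t0').sub ((t1.norm).pow 2)
  rw [← sq] at hlim
  exact le_of_tendsto' hlim hbox

lemma bpt_eq (θ : ℝ) : bpt θ = Real.cos θ + Real.sin θ * Complex.I := by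
  unfold bpt; rw [Complex.exp_mul_I]; push_cast; rfl

lemma bpt_periodic : Function.Periodic bpt (2*π) := by
  intro θ; rw [bpt_eq, bpt_eq, Real.cos_add_two_pi, Real.sin_add_two_pi]

lemma disk_polar {E : Type*} [NormedAddCommGroup E] [NormedSpace ℝ E] [CompleteSpace E]
    (F : ℂ → E) (hF : Continuous F) :
    ∫ x in unitDisk, F x = ∫ r in (0:ℝ)..1, ∫ θ in (0:ℝ)..(2*π), r • F (r * bpt θ) := by
  have hms : MeasurableSet unitDisk := Metric.isOpen_ball.measurableSet
  have hbc := bpt_cont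
  rw [← integral_indicator hms, ← Complex.integral_comp_polarCoord_symm]
  have hcont : Continuous fun p : ℝ × ℝ => p.1 • F (p.1 * bpt p.2) := by fun_prop
  have e1 : ∫ p in polarCoord.target, p.1 • unitDisk.indicator F (Complex.polarCoord.symm p) =
      ∫ p in Set.Ioo (0:ℝ) 1 ×ˢ Set.Ioo (-π) π, p.1 • F (p.1 * bpt p.2) := by
    have hsub : Set.Ioo (0:ℝ) 1 ×ˢ Set.Ioo (-π) π ⊆ polarCoord.target := by
      rw [polarCoord_target]
      exact Set.prod_mono Set.Ioo_subset_Ioi_self le_rfl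
    refine (setIntegral_eq_of_subset_of_forall_sdiff_eq_zero polarCoord.open_target.measurableSet hsub ?_).trans ?_
    · intro p hp
      have hmem : Complex.polarCoord.symm p ∉ unitDisk := by
        unfold unitDisk
        rw [mem_ball_zero_iff, Complex.norm_polarCoord_symm]
        intro h
        apply hp.2
        have h1 := hp.1
        rw [polarCoord_target] at h1
        exact ⟨⟨h1.1, lt_of_le_of_lt (le_abs_self _) h⟩, h1.2⟩
      rw [Set.indicator_of_notMem hmem, smul_zero]
    · apply setIntegral_congr_fun (measurableSet_Ioo.prod measurableSet_Ioo)
      intro p hp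
      have hmem : Complex.polarCoord.symm p ∈ unitDisk := by
        unfold unitDisk
        rw [mem_ball_zero_iff, Complex.norm_polarCoord_symm, abs_of_pos hp.1.1]
        exact hp.1.2
      beta_reduce
      rw [Set.indicator_of_mem hmem, Complex.polarCoord_symm_apply, bpt_eq]
  rw [e1, Measure.volume_eq_prod, setIntegral_prod]
  · rw [intervalIntegral.integral_of_le zero_le_one, integral_Ioc_eq_integral_Ioo]
    apply setIntegral_congr_fun measurableSet_Ioo
    intro r _
    have hper : Function.Periodic (fun θ : ℝ => r • F (r * bpt θ)) (2*π) := by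
      intro θ; simp only [bpt_periodic θ]
    have := hper.intervalIntegral_add_eq (-π) 0
    rw [zero_add, show -π + 2*π = π by ring] at this
    beta_reduce
    rw [← this, intervalIntegral.integral_of_le (by linarith [Real.pi_pos]),
      integral_Ioc_eq_integral_Ioo]
  · have : IntegrableOn (fun p : ℝ × ℝ => p.1 • F (p.1 * bpt p.2))
        (Set.Icc (0:ℝ) 1 ×ˢ Set.Icc (-π) π) (volume.prod volume) := by
      rw [← Measure.volume_eq_prod]
      exact hcont.continuousOn.integrableOn_compact (isCompact_Icc.prod isCompact_Icc)
    exact this.mono_set (Set.prod_mono Set.Ioo_subset_Icc_self Set.Ioo_subset_Icc_self)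

lemma bpt_hasDeriv (θ : ℝ) : HasDerivAt bpt (bpt θ * Complex.I) θ := by
  unfold bpt
  have h : HasDerivAt (fun θ : ℝ => (θ:ℂ) * Complex.I) (1 * Complex.I) θ :=
    (Complex.ofRealCLM.hasDerivAt (x := θ)).mul_const _
  simpa using h.cexp

lemma bpt_contDiff : ContDiff ℝ 1 bpt := by
  unfold bpt
  have : ContDiff ℝ 1 (fun θ : ℝ => (θ:ℂ)) := Complex.ofRealCLM.contDiff
  fun_prop

/-- Box divergence theorem, smooth version. -/
lemma box_div {E : Type*} [NormedAddCommGroup E] [NormedSpace ℝ E] [CompleteSpace E]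
    (f g : ℝ × ℝ → E) (hf : ContDiff ℝ 1 f) (hg : ContDiff ℝ 1 g)
    (fr gt : ℝ → ℝ → E) (hfr : ∀ r θ, HasDerivAt (fun s => f (s, θ)) (fr r θ) r)
    (hgt : ∀ r θ, HasDerivAt (fun s => g (r, s)) (gt r θ) θ)
    (hf0 : ∀ θ, f (0, θ) = 0) (hgp : ∀ r, g (r, 0) = g (r, 2*π)) :
    ∫ r in (0:ℝ)..1, ∫ θ in (0:ℝ)..(2*π), (fr r θ + gt r θ) =
      ∫ θ in (0:ℝ)..(2*π), f (1, θ) := by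
  have hfd : Differentiable ℝ f := hf.differentiable one_ne_zero
  have hgd : Differentiable ℝ g := hg.differentiable one_ne_zero
  have h := integral2_divergence_prod_of_hasFDerivAt_off_countable f g (fderiv ℝ f) (fderiv ℝ g)
    0 0 1 (2*π) ∅ Set.countable_empty hf.continuous.continuousOn hg.continuous.continuousOn
    (fun x _ => (hfd x).hasFDerivAt) (fun x _ => (hgd x).hasFDerivAt)
    (by
      have h1 := hf.continuous_fderiv one_ne_zero
      have h2 := hg.continuous_fderiv one_ne_zero
      apply ContinuousOn.integrableOn_compact (isCompact_uIcc.prod isCompact_uIcc)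
      exact (by fun_prop : Continuous _).continuousOn)
  have e1 : ∀ r θ, fderiv ℝ f (r, θ) (1, 0) = fr r θ := by
    intro r θ
    have hc : HasDerivAt (fun s : ℝ => (s, θ)) ((1:ℝ), (0:ℝ)) r :=
      (hasDerivAt_id r).prodMk (hasDerivAt_const r θ)
    exact ((hfd (r, θ)).hasFDerivAt.comp_hasDerivAt r hc).unique (hfr r θ)
  have e2 : ∀ r θ, fderiv ℝ g (r, θ) (0, 1) = gt r θ := by
    intro r θ
    have hc : HasDerivAt (fun s : ℝ => (r, s)) ((0:ℝ), (1:ℝ)) θ :=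
      (hasDerivAt_const θ r).prodMk (hasDerivAt_id θ)
    exact ((hgd (r, θ)).hasFDerivAt.comp_hasDerivAt θ hc).unique (hgt r θ)
  simp only [e1, e2, hf0, hgp] at h
  rw [h]; simp

lemma pd_lin (U : ℂ → ℝ) (x v : ℂ) :
    fderiv ℝ U x v = v.re * pd U 1 x + v.im * pd U Complex.I x := by
  unfold pd
  have : v = v.re • (1:ℂ) + v.im • Complex.I := by
    apply Complex.ext <;> simp
  conv_lhs => rw [this]
  rw [map_add, map_smul, map_smul]; simp

lemma pd_cont (U : ℂ → ℝ) (hU : ContDiff ℝ 1 U) (v : ℂ) : Continuous (pd U v) := by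
  unfold pd
  have := hU.continuous_fderiv one_ne_zero
  fun_prop

lemma U_r (U : ℂ → ℝ) (hU : ContDiff ℝ 1 U) (r θ : ℝ) :
    HasDerivAt (fun s : ℝ => U (s * bpt θ)) ((bpt θ).re * pd U 1 (r * bpt θ) +
      (bpt θ).im * pd U Complex.I (r * bpt θ)) r := by
  have hc : HasDerivAt (fun s : ℝ => (s:ℂ) * bpt θ) (1 * bpt θ) r :=
    (Complex.ofRealCLM.hasDerivAt (x := r)).mul_const _
  rw [one_mul] at hc
  have := ((hU.differentiable one_ne_zero) (r * bpt θ)).hasFDerivAt.comp_hasDerivAt r hc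
  rw [pd_lin] at this
  exact this

lemma U_t (U : ℂ → ℝ) (hU : ContDiff ℝ 1 U) (r θ : ℝ) :
    HasDerivAt (fun s : ℝ => U (r * bpt s)) (r * (-(bpt θ).im * pd U 1 (r * bpt θ) +
      (bpt θ).re * pd U Complex.I (r * bpt θ))) θ := by
  have hc : HasDerivAt (fun s : ℝ => (r:ℂ) * bpt s) (r * (bpt θ * Complex.I)) θ :=
    (bpt_hasDeriv θ).const_mul _
  have := ((hU.differentiable one_ne_zero) (r * bpt θ)).hasFDerivAt.comp_hasDerivAt θ hc
  rw [pd_lin] at this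
  convert! this using 1
  simp
  ring

lemma UP_contDiff (U : ℂ → ℝ) (hU : ContDiff ℝ 1 U) :
    ContDiff ℝ 1 (fun p : ℝ × ℝ => U (p.1 * bpt p.2)) := by
  have h1 := bpt_contDiff
  have h2 : ContDiff ℝ 1 (fun θ : ℝ => (θ:ℂ)) := Complex.ofRealCLM.contDiff
  exact hU.comp ((h2.comp contDiff_fst).mul (h1.comp contDiff_snd))

lemma green (U : ℂ → ℝ) (hU : ContDiff ℝ 1 U) (n : ℕ) :
    ∫ x in unitDisk, ((pd U 1 x : ℂ) + Complex.I * pd U Complex.I x) * x^n =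
      ∫ θ in (0:ℝ)..(2*π), (U (bpt θ) : ℂ) * bpt θ ^ (n+1) := by
  have c1 := pd_cont U hU 1
  have c2 := pd_cont U hU Complex.I
  have hUP := UP_contDiff U hU
  have h1 := bpt_contDiff
  have h2 : ContDiff ℝ 1 (fun θ : ℝ => (θ:ℂ)) := Complex.ofRealCLM.contDiff
  have hUC : ContDiff ℝ 1 (fun p : ℝ × ℝ => ((U (p.1 * bpt p.2) : ℝ) : ℂ)) := h2.comp hUP
  have hr : ContDiff ℝ 1 (fun p : ℝ × ℝ => (p.1 : ℂ)) := h2.comp contDiff_fst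
  have ht : ContDiff ℝ 1 (fun p : ℝ × ℝ => bpt p.2) := h1.comp contDiff_snd
  rw [disk_polar _ (by fun_prop)]
  have hb := box_div
    (fun p : ℝ × ℝ => ((U (p.1 * bpt p.2) : ℝ) : ℂ) * ((p.1:ℂ)^(n+1) * bpt p.2 ^ (n+1)))
    (fun p : ℝ × ℝ => ((U (p.1 * bpt p.2) : ℝ) : ℂ) *
      (Complex.I * (p.1:ℂ)^n * bpt p.2 ^ (n+1)))
    (hUC.mul ((hr.pow _).mul (ht.pow _))) (hUC.mul ((contDiff_const.mul (hr.pow _)).mul (ht.pow _)))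
    (fun r θ => (((bpt θ).re * pd U 1 (r * bpt θ) +
      (bpt θ).im * pd U Complex.I (r * bpt θ) : ℝ) : ℂ) * ((r:ℂ)^(n+1) * bpt θ ^ (n+1)) +
      ((U (r * bpt θ) : ℝ) : ℂ) * ((((n+1:ℕ):ℂ) * (r:ℂ)^n) * bpt θ ^ (n+1)))
    (fun r θ => ((r * (-(bpt θ).im * pd U 1 (r * bpt θ) +
      (bpt θ).re * pd U Complex.I (r * bpt θ)) : ℝ) : ℂ) * (Complex.I * (r:ℂ)^n * bpt θ ^ (n+1)) +
      ((U (r * bpt θ) : ℝ) : ℂ) * (Complex.I * (r:ℂ)^n *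
        (((n+1:ℕ):ℂ) * bpt θ ^ n * (bpt θ * Complex.I))))
    (by
      intro r θ
      apply HasDerivAt.mul
      · exact (U_r U hU r θ).ofReal_comp
      · show HasDerivAt (fun s : ℝ => (s:ℂ)^(n+1) * bpt θ^(n+1)) _ _
        apply HasDerivAt.mul_const
        have := (hasDerivAt_pow (n+1) (r:ℂ)).comp_ofReal
        simpa using this)
    (by
      intro r θ
      apply HasDerivAt.mul
      · exact (U_t U hU r θ).ofReal_comp
      · show HasDerivAt (fun s : ℝ => (Complex.I * (r:ℂ)^n) * bpt s^(n+1)) _ _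
        apply HasDerivAt.const_mul
        have := (bpt_hasDeriv θ).fun_pow (n+1)
        simpa using this)
    (by intro θ; simp)
    (by
      intro r
      have : bpt (2*π) = bpt 0 := by have := bpt_periodic 0; rwa [zero_add] at this
      simp only [this])
  have e : ∀ r θ : ℝ, r • (((pd U 1 (r * bpt θ) : ℝ) : ℂ) +
      Complex.I * ((pd U Complex.I (r * bpt θ) : ℝ) : ℂ)) * ((r:ℂ) * bpt θ)^n = 
      (((bpt θ).re * pd U 1 (r * bpt θ) +
      (bpt θ).im * pd U Complex.I (r * bpt θ) : ℝ) : ℂ) * ((r:ℂ)^(n+1) * bpt θ ^ (n+1)) +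
      ((U (r * bpt θ) : ℝ) : ℂ) * ((((n+1:ℕ):ℂ) * (r:ℂ)^n) * bpt θ ^ (n+1)) + 
      (((r * (-(bpt θ).im * pd U 1 (r * bpt θ) +
      (bpt θ).re * pd U Complex.I (r * bpt θ)) : ℝ) : ℂ) * (Complex.I * (r:ℂ)^n * bpt θ ^ (n+1)) +
      ((U (r * bpt θ) : ℝ) : ℂ) * (Complex.I * (r:ℂ)^n *
        (((n+1:ℕ):ℂ) * bpt θ ^ n * (bpt θ * Complex.I)))) := by
    intro r θ
    set z := bpt θ
    have hz : (z.re : ℂ)^2 + (z.im:ℂ)^2 = 1 := by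
      have : Complex.normSq z = 1 := by rw [Complex.normSq_eq_norm_sq, bpt_norm]; norm_num
      rw [Complex.normSq_apply] at this
      have h3 : z.re^2 + z.im^2 = 1 := by linarith
      exact_mod_cast h3
    have hz' : z = z.re + z.im * Complex.I := (Complex.re_add_im z).symm
    have hI : Complex.I^2 = -1 := Complex.I_sq
    set A := pd U 1 (r * z)
    set B := pd U Complex.I (r * z)
    set x := (z.re:ℂ)
    set y := (z.im:ℂ)
    have hzz : ((x:ℂ) - y * Complex.I) * z = 1 := by
      rw [hz']; linear_combination hz - y^2 * hI
    rw [Complex.real_smul, mul_pow]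
    push_cast
    have key : ((x:ℂ) * A + y * B) + Complex.I * (-y * A + x * B) =
      (x - y * Complex.I) * (A + Complex.I * B) := by linear_combination (y * B) * hI
    rw [pow_succ, pow_succ]
    linear_combination (-(r:ℂ) * r^n * z^n * z) * key -
      (r:ℂ) * r^n * z^n * (A + Complex.I * B) * hzz - (U (r*z):ℂ) * r^n * (n+1) * z^n * z * hI
  simp only [← smul_mul_assoc, e]
  rw [hb]
  simp

lemma disk_mean (U : ℂ → ℝ) (hU : ContDiff ℝ 1 U) :
    ∫ x in unitDisk, (2 * U x + (x.re * pd U 1 x + x.im * pd U Complex.I x)) = bint U := by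
  have c1 := pd_cont U hU 1
  have c2 := pd_cont U hU Complex.I
  have hUc := hU.continuous
  have hUP := UP_contDiff U hU
  rw [disk_polar _ (by fun_prop)]
  have hb := box_div
    (fun p : ℝ × ℝ => p.1^2 * U (p.1 * bpt p.2)) (fun _ => 0)
    ((contDiff_fst.pow 2).mul hUP) contDiff_const
    (fun r θ => (2 * r) * U (r * bpt θ) + r^2 * ((bpt θ).re * pd U 1 (r * bpt θ) +
      (bpt θ).im * pd U Complex.I (r * bpt θ)))
    (fun r θ => 0)
    (by
      intro r θ
      apply HasDerivAt.mul
      · simpa using hasDerivAt_pow 2 r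
      · exact U_r U hU r θ)
    (by intro r θ; exact hasDerivAt_const _ _)
    (by intro θ; simp)
    (by intro r; rfl)
  have e : ∀ r θ : ℝ, r • (2 * U (r * bpt θ) + (((r:ℂ) * bpt θ).re * pd U 1 (r * bpt θ) +
      ((r:ℂ) * bpt θ).im * pd U Complex.I (r * bpt θ))) =
      (2 * r) * U (r * bpt θ) + r^2 * ((bpt θ).re * pd U 1 (r * bpt θ) +
      (bpt θ).im * pd U Complex.I (r * bpt θ)) + 0 := by
    intro r θ
    rw [Complex.re_ofReal_mul, Complex.im_ofReal_mul, smul_eq_mul]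
    ring
  simp only [e]
  rw [hb]
  simp [bint]

lemma disk_int {E : Type*} [NormedAddCommGroup E] [NormedSpace ℝ E]
    (F : ℂ → E) (hF : Continuous F) : IntegrableOn F unitDisk :=
  (hF.continuousOn.integrableOn_compact (isCompact_closedBall (0:ℂ) 1)).mono_set
    Metric.ball_subset_closedBall

lemma disk_ortho (n m : ℕ) : ∫ x in unitDisk, x ^ n * (starRingEnd ℂ) (x ^ m) =
    if n = m then (π:ℂ) / (n+1) else 0 := by
  have hc : Continuous fun x : ℂ => x ^ n * (starRingEnd ℂ) (x ^ m) :=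
    (continuous_pow n).mul (Complex.continuous_conj.comp (continuous_pow m))
  rw [disk_polar _ hc]
  have e : ∀ r θ : ℝ, r • (((r:ℂ) * bpt θ)^n * (starRingEnd ℂ) (((r:ℂ) * bpt θ)^m)) =
      (r:ℂ)^(n+m+1) * (bpt θ ^ n * (starRingEnd ℂ) (bpt θ ^ m)) := by
    intro r θ
    rw [Complex.real_smul, map_pow, map_mul, Complex.conj_ofReal, map_pow]
    ring
  simp only [e, intervalIntegral.integral_const_mul, bpt_ortho]
  split_ifs with h
  · subst h
    rw [intervalIntegral.integral_mul_const]
    have : ∫ r in (0:ℝ)..1, (r:ℂ)^(n+n+1) = ((∫ r in (0:ℝ)..1, r^(n+n+1) : ℝ) : ℂ) := by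
      rw [← intervalIntegral.integral_ofReal]; simp
    rw [this, integral_pow]
    have h1 : (n:ℂ) + 1 ≠ 0 := by exact_mod_cast Nat.succ_ne_zero n
    have h2 : (n:ℂ) + n + 1 + 1 ≠ 0 := by exact_mod_cast Nat.succ_ne_zero (n+n+1)
    push_cast
    simp only [one_pow, ne_eq, Nat.add_eq_zero_iff, one_ne_zero, and_false, not_false_eq_true, zero_pow, sub_zero]
    rw [show (n:ℂ)+n+1+1 = 2*(n+1) by ring]
    field_simp
  · simp

lemma dirichlet (U : ℂ → ℝ) (hU : ContDiff ℝ 1 U) (c : ℕ → ℂ)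
    (hc : ∀ k, ∫ θ in (0:ℝ)..(2*π), (U (bpt θ) : ℂ) * bpt θ ^ k = 2 * π * (starRingEnd ℂ) (c k))
    (N : ℕ) :
    4 * π * ∑ k ∈ Finset.Icc 1 N, (k:ℝ) * ‖c k‖^2 ≤ ∫ x in unitDisk, gradSq U x := by
  have hsum : ∑ k ∈ Finset.Icc 1 N, (k:ℝ) * ‖c k‖^2 =
      ∑ i ∈ Finset.range N, ((i+1:ℕ):ℝ) * ‖c (i+1)‖^2 := by
    induction N with
    | zero => simp
    | succ n ih => rw [Finset.sum_Icc_succ_top (by omega), ih, Finset.sum_range_succ]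
  rw [hsum]
  set S := ∑ i ∈ Finset.range N, ((i+1:ℕ):ℝ) * ‖c (i+1)‖^2 with hS
  have c1 := pd_cont U hU 1
  have c2 := pd_cont U hU Complex.I
  set W : ℂ → ℂ := fun x => (pd U 1 x : ℂ) + Complex.I * pd U Complex.I x with hW
  have hWc : Continuous W := by fun_prop
  set w : ℂ → ℂ := fun x => ∑ i ∈ Finset.range N, (((i+1:ℕ):ℂ) * c (i+1)) * x^i with hw
  have hwc : Continuous w := by fun_prop
  have hwcc : Continuous fun x => (starRingEnd ℂ) (w x) := Complex.continuous_conj.comp hwc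
  have i1 : ∫ x in unitDisk, W x * w x = 2 * π * (S:ℂ) := by
    have e : ∀ x, W x * w x = ∑ i ∈ Finset.range N, (((i+1:ℕ):ℂ) * c (i+1)) * (W x * x^i) := by
      intro x; simp only [hw]; rw [Finset.mul_sum]
      exact Finset.sum_congr rfl fun i _ => by ring
    simp only [e]
    rw [integral_finsetSum _ (fun i _ => disk_int _ (by fun_prop))]
    rw [hS]; push_cast; rw [Finset.mul_sum]
    apply Finset.sum_congr rfl
    intro i _
    rw [integral_const_mul, green U hU i, hc, ← Complex.mul_conj']
    push_cast; ring
  have i2 : ∫ x in unitDisk, w x * (starRingEnd ℂ) (w x) = π * (S:ℂ) := by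
    have e : ∀ x, w x * (starRingEnd ℂ) (w x) = ∑ i ∈ Finset.range N, ∑ j ∈ Finset.range N,
        ((((i+1:ℕ):ℂ) * c (i+1)) * (starRingEnd ℂ) (((j+1:ℕ):ℂ) * c (j+1))) *
          (x^i * (starRingEnd ℂ) (x^j)) := by
      intro x; simp only [hw]; rw [map_sum, Finset.sum_mul_sum]
      refine Finset.sum_congr rfl fun i _ => Finset.sum_congr rfl fun j _ => ?_
      rw [map_mul _ _ (x^j)]; ring
    simp only [e]
    have hcc : ∀ i j : ℕ, Continuous fun x : ℂ => ((((i+1:ℕ):ℂ) * c (i+1)) * (starRingEnd ℂ) (((j+1:ℕ):ℂ) * c (j+1))) *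
          (x^i * (starRingEnd ℂ) (x^j)) := fun i j =>
      continuous_const.mul ((continuous_pow i).mul (Complex.continuous_conj.comp (continuous_pow j)))
    rw [integral_finsetSum _ (fun i _ => disk_int _ (continuous_finsetSum _ fun j _ => hcc i j))]
    rw [hS, Complex.ofReal_sum, Finset.mul_sum]
    apply Finset.sum_congr rfl
    intro i hi
    rw [integral_finsetSum _ (fun j _ => disk_int _ (hcc i j))]
    simp only [integral_const_mul, disk_ortho, mul_ite, mul_zero]
    rw [Finset.sum_ite_eq, if_pos hi, Complex.ofReal_mul, Complex.ofReal_pow, ← Complex.mul_conj', map_mul, Complex.conj_natCast]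
    have h1 : (i:ℂ) + 1 ≠ 0 := by exact_mod_cast Nat.succ_ne_zero i
    push_cast
    field_simp
  have r1 : ∫ x in unitDisk, (W x * w x).re = 2 * π * S := by
    have := Complex.reCLM.integral_comp_comm (disk_int (fun x => W x * w x) (by fun_prop))
    simp only [Complex.reCLM_apply] at this
    rw [this, i1]
    have : (2 * π * (S:ℂ)) = ((2 * π * S : ℝ) : ℂ) := by push_cast; ring
    rw [this, Complex.ofReal_re]
  have r2 : ∫ x in unitDisk, (w x * (starRingEnd ℂ) (w x)).re = π * S := by
    have := Complex.reCLM.integral_comp_comm (disk_int (fun x => w x * (starRingEnd ℂ) (w x)) (by fun_prop))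
    simp only [Complex.reCLM_apply] at this
    rw [this, i2]
    have : (π * (S:ℂ)) = ((π * S : ℝ) : ℂ) := by push_cast; ring
    rw [this, Complex.ofReal_re]
  have hmono : ∫ x in unitDisk, (4 * (W x * w x).re - 4 * (w x * (starRingEnd ℂ) (w x)).re) ≤
      ∫ x in unitDisk, gradSq U x := by
    apply integral_mono
    · exact disk_int _ (by fun_prop)
    · exact disk_int _ (by unfold gradSq; fun_prop)
    · intro x
      have h0 : W x = ⟨pd U 1 x, pd U Complex.I x⟩ := by
        apply Complex.ext <;> simp [hW]
      simp only [h0, gradSq, Complex.mul_re, Complex.conj_re, Complex.conj_im]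
      nlinarith [sq_nonneg (pd U 1 x - 2 * (w x).re), sq_nonneg (pd U Complex.I x + 2 * (w x).im)]
  rw [integral_sub, integral_const_mul, integral_const_mul, r1, r2] at hmono
  · linarith
  · exact disk_int (fun x => 4 * (W x * w x).re) (by fun_prop)
  · exact disk_int (fun x => 4 * (w x * (starRingEnd ℂ) (w x)).re) (by fun_prop)

lemma bpt_fourier (n : ℤ) (θ : ℝ) :
    fourier n ((θ : ℝ) : AddCircle (2 * π - 0)) = bpt θ ^ n := by
  rw [fourier_coe_apply, bpt, ← Complex.exp_int_mul]
  congr 1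
  have : (π:ℂ) ≠ 0 := by exact_mod_cast Real.pi_ne_zero
  push_cast
  field_simp
  ring

lemma four (g g' : ℝ → ℂ) (hg : ∀ x, HasDerivAt g (g' x) x) (hg' : Continuous g')
    (hper : Function.Periodic g (2*π)) :
    ∃ c : ℤ → ℂ, (∀ n, ∫ θ in (0:ℝ)..(2*π), g θ * bpt θ ^ (-n) = 2 * π * c n) ∧
      Summable (fun n => ‖c n‖) ∧ ∀ θ, HasSum (fun n : ℤ => c n * bpt θ ^ n) (g θ) := by
  have hab : (0:ℝ) < 2 * π := by positivity
  have hgc : Continuous g := continuous_iff_continuousAt.2 fun x => (hg x).continuousAt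
  haveI : Fact (0 < 2 * π - 0) := ⟨by linarith⟩
  have hper' : Function.Periodic g (2*π - 0) := by rwa [sub_zero]
  let F : C(AddCircle (2*π - 0), ℂ) := ⟨hper'.lift, continuous_coinduced_dom.mpr hgc⟩
  have hF : ∀ x : ℝ, F (x : AddCircle (2*π-0)) = g x := fun x => hper'.lift_coe x
  have hcoef : ∀ n, fourierCoeff F n = fourierCoeffOn hab g n := by
    intro n
    rw [fourierCoeffOn_eq_integral, fourierCoeff_eq_intervalIntegral _ _ 0]
    simp only [hF]
    rw [show (0:ℝ) + (2*π - 0) = 2*π by ring]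
  have hint : ∀ n, ∫ θ in (0:ℝ)..(2*π), g θ * bpt θ ^ (-n) = 2 * π * fourierCoeff F n := by
    intro n
    rw [hcoef, fourierCoeffOn_eq_integral]
    simp only [bpt_fourier, smul_eq_mul, Complex.real_smul]
    have : (π:ℂ) ≠ 0 := by exact_mod_cast Real.pi_ne_zero
    push_cast
    rw [sub_zero, ← mul_assoc, mul_one_div_cancel (by simpa using this), one_mul]
    simp only [mul_comm]
  have hL2 : MemLp g' 2 (volume.restrict (Set.Ioc 0 (2*π))) := by
    obtain ⟨M, hM⟩ := (isCompact_Icc (a := (0:ℝ)) (b := 2*π)).exists_bound_of_continuousOn hg'.continuousOn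
    apply MemLp.of_bound hg'.aestronglyMeasurable M
    filter_upwards [ae_restrict_mem measurableSet_Ioc] with x hx
    exact hM x (Set.Ioc_subset_Icc_self hx)
  have hsq := (hasSum_sq_fourierCoeffOn hab hL2).summable
  have hs : Summable (fun n => ‖fourierCoeff F n‖) := by
    have h1 : Summable fun n : ℤ => 1 / (n:ℝ)^2 := Real.summable_one_div_int_pow.2 (by norm_num)
    have h2 := (h1.add hsq)
    refine Summable.of_norm_bounded_eventually h2 ?_
    have : {(0:ℤ)}ᶜ ∈ cofinite := (Set.finite_singleton _).compl_mem_cofinite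
    filter_upwards [this] with n hn
    have hn' : n ≠ 0 := hn
    have hp0 : g (2*π) = g 0 := by have := hper 0; rwa [zero_add] at this
    rw [hcoef, fourierCoeffOn_of_hasDerivAt hab hn' (fun x _ => hg x) (hg'.intervalIntegrable _ _), hp0]
    have hnr : (0:ℝ) < |(n:ℝ)| := by positivity
    have e : ‖‖(1:ℂ) / (-2 * π * Complex.I * n) *
        (fourier (-n) ((0:ℝ) : AddCircle (2*π-0)) * (g 0 - g 0) -
        (((2*π:ℝ):ℂ) - ((0:ℝ):ℂ)) * fourierCoeffOn hab g' n)‖‖ =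
        (1 / |(n:ℝ)|) * ‖fourierCoeffOn hab g' n‖ := by
      have := Real.pi_pos
      simp [abs_of_pos this]
      field_simp
    rw [e]
    have := sq_nonneg (1 / |(n:ℝ)| - ‖fourierCoeffOn hab g' n‖)
    have e2 : (1 / |(n:ℝ)|)^2 = 1 / (n:ℝ)^2 := by rw [div_pow, sq_abs, one_pow]
    nlinarith [sq_nonneg (1 / |(n:ℝ)|), sq_nonneg ‖fourierCoeffOn hab g' n‖]
  refine ⟨fourierCoeff F, hint, hs, fun θ => ?_⟩
  have := has_pointwise_sum_fourier_series_of_summable hs.of_norm (θ : AddCircle (2*π-0))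
  simpa only [bpt_fourier, smul_eq_mul, hF] using this

lemma lm_bound (φ : ℂ → ℝ) (hφ : ContDiff ℝ 1 φ)
    (h1 : ∫ θ in (0:ℝ)..(2*π), Real.exp (φ (bpt θ)) = 1)
    (h2 : ∫ θ in (0:ℝ)..(2*π), (Real.exp (φ (bpt θ)) : ℂ) * bpt θ = 0) :
    0 ≤ Real.log (4 * π^2) + bint φ / π + (∫ x in unitDisk, gradSq φ x) / (4 * π) := by
  have hbc := bpt_cont
  have hpi := Real.pi_pos
  have hpc : (π:ℂ) ≠ 0 := by exact_mod_cast Real.pi_ne_zero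
  have hφc := hφ.continuous
  have hf : ContDiff ℝ 1 (fun θ => φ (bpt θ)) := hφ.comp bpt_contDiff
  obtain ⟨c, hint, hs, hsum⟩ := four (fun θ => (φ (bpt θ) : ℂ))
    (fun θ => ((deriv (fun θ => φ (bpt θ)) θ : ℝ) : ℂ))
    (fun x => ((hf.differentiable one_ne_zero) x).hasDerivAt.ofReal_comp)
    (Complex.continuous_ofReal.comp (hf.continuous_deriv le_rfl))
    (fun θ => by simp only [bpt_periodic θ])
  have hinv : ∀ θ, (starRingEnd ℂ) (bpt θ) = (bpt θ)⁻¹ := fun θ =>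
    (Complex.inv_eq_conj (bpt_norm θ)).symm
  have hconj : ∀ n, c (-n) = (starRingEnd ℂ) (c n) := by
    intro n
    have e := congrArg (starRingEnd ℂ) (hint n)
    rw [intervalIntegral.integral_of_le (by positivity), ← integral_conj,
      ← intervalIntegral.integral_of_le (by positivity)] at e
    simp only [map_mul, Complex.conj_ofReal, map_zpow₀, hinv, inv_zpow', neg_neg, map_ofNat] at e
    have e' := hint (-n)
    rw [neg_neg, e] at e'
    have : (2 * π : ℂ) ≠ 0 := by simpa using hpc
    exact (mul_left_cancel₀ this e').symm
  have hc0 : c 0 = ((bint φ / (2*π) : ℝ) : ℂ) := by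
    have e := hint 0
    simp only [neg_zero, zpow_zero, mul_one] at e
    rw [intervalIntegral.integral_ofReal] at e
    unfold bint
    push_cast
    rw [e]
    field_simp
  set m := bint φ / (2*π) with hm
  set a : ℕ → ℂ := fun k => c k with ha
  have hsa : Summable fun k => ‖a k‖ := hs.comp_injective Nat.cast_injective
  have hD := dirichlet φ hφ a (by
    intro k
    have e := hint (-k)
    rw [hconj] at e
    simpa using e)
  set E := ∫ x in unitDisk, gradSq φ x with hE
  set w : ℕ → ℝ → ℝ := fun N θ => 2 * (∑ k ∈ Finset.Icc 1 N, a k * bpt θ ^ k).re with hw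
  have hwc : ∀ N, Continuous (w N) := fun N => by
    simp only [hw]; fun_prop
  have hwlim : ∀ θ, Tendsto (fun N => w N θ) atTop (nhds (φ (bpt θ) - m)) := by
    intro θ
    have s1 := (hsum θ).nat_add_neg
    have e : ∀ n : ℕ, c n * bpt θ ^ (n:ℤ) + c (-n) * bpt θ ^ (-(n:ℤ)) =
        ((2 * (a n * bpt θ ^ n).re : ℝ) : ℂ) := by
      intro n
      have : c (-n) * bpt θ ^ (-(n:ℤ)) = (starRingEnd ℂ) (a n * bpt θ ^ n) := by
        rw [hconj, map_mul, map_pow, hinv, zpow_neg, zpow_natCast, inv_pow]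
      rw [this, zpow_natCast, Complex.add_conj]
    simp only [e] at s1
    rw [zpow_zero, mul_one, hc0, ← Complex.ofReal_add, Complex.hasSum_ofReal] at s1
    have t := (s1.tendsto_sum_nat.comp (tendsto_add_atTop_nat 1)).sub_const (2*m)
    have : φ (bpt θ) + m - 2*m = φ (bpt θ) - m := by ring
    rw [this] at t
    refine t.congr fun N => ?_
    have hidx : ∀ N : ℕ, w N θ = ∑ i ∈ Finset.range (N+1), 2 * (a i * bpt θ ^ i).re - 2 * m := by
      intro N
      induction N with
      | zero => simp [hw, ha, hc0]
      | succ n ih =>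
        rw [Finset.sum_range_succ]
        have : w (n+1) θ = w n θ + 2 * (a (n+1) * bpt θ ^ (n+1)).re := by
          simp only [hw]
          rw [Finset.sum_Icc_succ_top (by omega), Complex.add_re]; ring
        rw [this, ih]; ring
    rw [hidx]; rfl
  have hwb : ∀ N θ, w N θ ≤ 2 * ∑' k, ‖a k‖ := by
    intro N θ
    simp only [hw]
    have h3 : ‖∑ k ∈ Finset.Icc 1 N, a k * bpt θ ^ k‖ ≤ ∑ k ∈ Finset.Icc 1 N, ‖a k‖ := by
      refine (norm_sum_le _ _).trans (le_of_eq ?_)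
      exact Finset.sum_congr rfl fun k _ => by rw [norm_mul, norm_pow, bpt_norm, one_pow, mul_one]
    have h4 := hsa.sum_le_tsum (Finset.Icc 1 N) (fun _ _ => norm_nonneg _)
    have h5 := Complex.re_le_norm (∑ k ∈ Finset.Icc 1 N, a k * bpt θ ^ k)
    linarith
  set B := Real.exp (2 * ∑' k, ‖a k‖)
  have l1 : Tendsto (fun N => ∫ θ in (0:ℝ)..(2*π), Real.exp (w N θ)) atTop
      (nhds (∫ θ in (0:ℝ)..(2*π), Real.exp (φ (bpt θ) - m))) := by
    apply intervalIntegral.tendsto_integral_filter_of_dominated_convergence (fun _ => B)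
    · exact Eventually.of_forall fun N => (Real.continuous_exp.comp (hwc N)).aestronglyMeasurable
    · exact Eventually.of_forall fun N => Eventually.of_forall fun θ _ => by
        rw [Real.norm_eq_abs, Real.abs_exp]; exact Real.exp_le_exp.2 (hwb N θ)
    · exact intervalIntegrable_const
    · exact Eventually.of_forall fun θ _ => (Real.continuous_exp.tendsto _).comp (hwlim θ)
  have l2 : Tendsto (fun N => ∫ θ in (0:ℝ)..(2*π), (Real.exp (w N θ) : ℂ) * bpt θ) atTop
      (nhds (∫ θ in (0:ℝ)..(2*π), (Real.exp (φ (bpt θ) - m) : ℂ) * bpt θ)) := by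
    apply intervalIntegral.tendsto_integral_filter_of_dominated_convergence (fun _ => B)
    · refine Eventually.of_forall fun N => Continuous.aestronglyMeasurable ?_
      have := hwc N
      fun_prop
    · exact Eventually.of_forall fun N => Eventually.of_forall fun θ _ => by
        rw [norm_mul, bpt_norm, mul_one, Complex.norm_real, Real.norm_eq_abs, Real.abs_exp]
        exact Real.exp_le_exp.2 (hwb N θ)
    · exact intervalIntegrable_const
    · refine Eventually.of_forall fun θ _ => Tendsto.mul_const _ ?_
      exact (Complex.continuous_ofReal.tendsto _).comp
        ((Real.continuous_exp.tendsto _).comp (hwlim θ))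
  have v1 : ∫ θ in (0:ℝ)..(2*π), Real.exp (φ (bpt θ) - m) = Real.exp (-m) := by
    simp only [sub_eq_add_neg, Real.exp_add]
    rw [intervalIntegral.integral_mul_const, h1, one_mul]
  have v2 : ∫ θ in (0:ℝ)..(2*π), (Real.exp (φ (bpt θ) - m) : ℂ) * bpt θ = 0 := by
    have : ∀ θ, (Real.exp (φ (bpt θ) - m) : ℂ) * bpt θ =
        (Real.exp (-m) : ℂ) * ((Real.exp (φ (bpt θ)) : ℂ) * bpt θ) := by
      intro θ; rw [sub_eq_add_neg, Real.exp_add]; push_cast; ring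
    simp only [this]
    rw [intervalIntegral.integral_const_mul, h2, mul_zero]
  rw [v1] at l1
  rw [v2] at l2
  have l3 := (l1.pow 2).sub (l2.norm.pow 2)
  have hle : Real.exp (-m)^2 - ‖(0:ℂ)‖^2 ≤ 4 * π^2 * Real.exp (E / (4*π)) := by
    refine le_of_tendsto l3 (Eventually.of_forall fun N => ?_)
    refine (lm2 N a (w N) (fun θ => rfl)).trans ?_
    have : ∑ k ∈ Finset.Icc 1 N, (k:ℝ) * ‖a k‖^2 ≤ E / (4*π) := by
      rw [le_div_iff₀ (by positivity)]
      linarith [hD N]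
    have := Real.exp_le_exp.2 this
    gcongr
  rw [norm_zero, zero_pow two_ne_zero, sub_zero, ← Real.exp_nat_mul] at hle
  have hlog := Real.log_le_log (Real.exp_pos _) hle
  rw [Real.log_exp, Real.log_mul (by positivity) (Real.exp_ne_zero _), Real.log_exp] at hlog
  have : bint φ / π = 2 * m := by rw [hm]; field_simp
  rw [this]
  push_cast at hlog
  linarith

lemma u_bound (u : ℂ → ℝ) (hu : ContDiff ℝ 1 u)
    (h1 : bint (fun x => Real.exp (u x / 2)) = 1)
    (h2 : bint (fun x => x.re * Real.exp (u x / 2)) = 0)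
    (h3 : bint (fun x => x.im * Real.exp (u x / 2)) = 0) :
    -(2 * π * Real.log (4 * π^2)) - (∫ x in unitDisk, gradSq u x) / 8 ≤ bint u := by
  have hbc := bpt_cont
  have huc := hu.continuous
  have hpi := Real.pi_pos
  have hd : ∀ x v, pd (fun x => u x / 2) v x = pd u v x / 2 := by
    intro x v
    unfold pd
    have := ((hu.differentiable one_ne_zero) x).hasFDerivAt.mul_const (1/2 : ℝ)
    have e : (fun x => u x / 2) = fun x => u x * (1/2) := by funext y; ring
    rw [e, this.fderiv]
    simp; ring
  have hg : ∀ x, gradSq (fun x => u x / 2) x = gradSq u x * (1/4) := by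
    intro x; unfold gradSq; rw [hd, hd]; ring
  have hb := lm_bound (fun x => u x / 2) (hu.div_const 2) h1 (by
    apply Complex.ext
    · have := Complex.reCLM.intervalIntegral_comp_comm (μ := volume) (a := 0) (b := 2*π)
        (f := fun θ => (Real.exp (u (bpt θ) / 2) : ℂ) * bpt θ)
        (Continuous.intervalIntegrable (by fun_prop) _ _)
      simp only [Complex.reCLM_apply, Complex.re_ofReal_mul] at this
      rw [← this, Complex.zero_re]
      refine Eq.trans ?_ h2
      unfold bint
      exact intervalIntegral.integral_congr fun θ _ => mul_comm _ _
    · have := Complex.imCLM.intervalIntegral_comp_comm (μ := volume) (a := 0) (b := 2*π)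
        (f := fun θ => (Real.exp (u (bpt θ) / 2) : ℂ) * bpt θ)
        (Continuous.intervalIntegrable (by fun_prop) _ _)
      simp only [Complex.imCLM_apply, Complex.im_ofReal_mul] at this
      rw [← this, Complex.zero_im]
      refine Eq.trans ?_ h3
      unfold bint
      exact intervalIntegral.integral_congr fun θ _ => mul_comm _ _)
  simp only [hg] at hb
  rw [integral_mul_const] at hb
  have e : bint (fun x => u x / 2) = bint u / 2 := by
    unfold bint; rw [intervalIntegral.integral_div]
  rw [e] at hb
  have := mul_nonneg (by positivity : 0 ≤ 2 * π) hb
  have e2 : 2 * π * (Real.log (4 * π^2) + bint u / 2 / π + (∫ x in unitDisk, gradSq u x) * (1/4) / (4*π)) =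
      2 * π * Real.log (4 * π^2) + bint u + (∫ x in unitDisk, gradSq u x) / 8 := by
    field_simp; ring
  linarith

lemma disk_lower (u : ℂ → ℝ) (hu : ContDiff ℝ 1 u) :
    bint u ≤ 2 * (∫ x in unitDisk, u x) + (∫ _ in unitDisk, (1:ℝ)) / 2 +
      (∫ x in unitDisk, gradSq u x) / 2 := by
  have c1 := pd_cont u hu 1
  have c2 := pd_cont u hu Complex.I
  have huc := hu.continuous
  have cg : Continuous (gradSq u) := by unfold gradSq; fun_prop
  have i1 := disk_int (fun x => 2 * u x) (by fun_prop)
  have i2 := disk_int (fun _ : ℂ => (1:ℝ) / 2) (by fun_prop)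
  have i12 := disk_int (fun x => 2 * u x + 1 / 2) (by fun_prop)
  have i3 := disk_int (fun x => gradSq u x / 2) (by fun_prop)
  rw [← disk_mean u hu, ← integral_const_mul, ← integral_div, ← integral_div, ← integral_add i1 i2,
    ← integral_add i12 i3]
  apply setIntegral_mono_on
  · exact disk_int _ (by fun_prop)
  · exact (i12.add i3)
  · exact Metric.isOpen_ball.measurableSet
  · intro x hx
    have hx' : ‖x‖ < 1 := by simpa [unitDisk] using hx
    have h1 : Complex.normSq x ≤ 1 := by
      rw [Complex.normSq_eq_norm_sq]; nlinarith [norm_nonneg x]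
    rw [Complex.normSq_apply] at h1
    simp only [gradSq, Pi.add_apply]
    nlinarith [sq_nonneg (x.re - pd u 1 x), sq_nonneg (x.im - pd u Complex.I x)]

/-- Coercive lower bound for I_ε on the barycenter-constrained set, for ε ∈ (−δ, −δ/2). -/
theorem linking_lower_bound
    (K h : ℂ → ℝ)
    (hK : ContDiff ℝ 2 K)
    (hKneg : ∀ x ∈ closedUnitDisk, K x < 0)
    (hh : ContDiff ℝ 2 (fun θ => h (bpt θ))) :
    ∃ δ₀ ∈ Set.Ioo (0:ℝ) 1, ∀ δ ∈ Set.Ioo (0:ℝ) δ₀, ∃ C : ℝ,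
      ∀ ε ∈ Set.Ioo (-δ) (-δ/2), ∀ u : ℂ → ℝ, ContDiff ℝ 1 u →
        bint (fun x => Real.exp (u x / 2)) = 1 →
        bint (fun x => x.re * Real.exp (u x / 2)) = 0 →
        bint (fun x => x.im * Real.exp (u x / 2)) = 0 →
        (1/5) * (∫ x in unitDisk, gradSq u x) + C ≤ Ieps K h ε u := by
  have hbc := bpt_cont
  obtain ⟨x0, hx0, hmax⟩ := (isCompact_closedBall (0:ℂ) 1).exists_isMaxOn
    ⟨0, Metric.mem_closedBall_self zero_le_one⟩ hK.continuous.continuousOn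
  have hc : 0 < -2 * K x0 := by have := hKneg x0 hx0; linarith
  set c := -2 * K x0 with hcdef
  have hKc : ∀ x ∈ unitDisk, c ≤ -2 * K x := by
    intro x hx
    have : K x ≤ K x0 := hmax (Metric.ball_subset_closedBall hx)
    linarith
  obtain ⟨M, hM⟩ := (isCompact_Icc (a := (0:ℝ)) (b := 2*π)).exists_bound_of_continuousOn
    hh.continuous.continuousOn
  have hpi := Real.pi_pos
  have hM0 : 0 ≤ M := (norm_nonneg _).trans (hM 0 ⟨le_rfl, by positivity⟩)
  set V : ℝ := ∫ _ in unitDisk, (1:ℝ) with hV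
  have hV0 : 0 ≤ V := integral_nonneg fun _ => zero_le_one
  set L : ℝ := |2 * π * Real.log (4 * π^2)| with hL
  have hL0 : 0 ≤ L := abs_nonneg _
  refine ⟨min (1/20) c, ⟨lt_min (by norm_num) hc, lt_of_le_of_lt (min_le_left _ _) (by norm_num)⟩, ?_⟩
  intro δ hδ
  refine ⟨-2 * (3 * L + V + 4 * M), ?_⟩
  intro ε hε u hu h1 h2 h3
  have hδ1 : δ < 1/20 := lt_of_lt_of_le hδ.2 (min_le_left _ _)
  have hδ2 : δ < c := lt_of_lt_of_le hδ.2 (min_le_right _ _)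
  have hε1 : -δ < ε := hε.1
  have hε2 : ε < 0 := by have := hε.2; have := hδ.1; linarith
  have hub := u_bound u hu h1 h2 h3
  have hdl := disk_lower u hu
  have hLb : 2 * π * Real.log (4 * π^2) ≤ L := le_abs_self _
  have huc := hu.continuous
  have hKcont := hK.continuous
  have hhc := hh.continuous
  have c1 := pd_cont u hu 1
  have c2 := pd_cont u hu Complex.I
  have cg : Continuous (gradSq u) := by unfold gradSq; fun_prop
  have hE0 : 0 ≤ ∫ x in unitDisk, gradSq u x :=
    integral_nonneg fun x => by unfold gradSq; positivity
  rw [← hV] at hdl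
  -- disk part
  have hdisk : (1+ε)/2 * (∫ x in unitDisk, gradSq u x) - ε * (∫ x in unitDisk, u x) ≤
      (∫ x in unitDisk, ((1/2) * gradSq u x - 2 * K x * Real.exp (u x))) + ε * Tfun u := by
    unfold Tfun
    have i1 := disk_int (fun x => (1+ε)/2 * gradSq u x) (by fun_prop)
    have i2 := disk_int (fun x => ε * u x) (by fun_prop)
    have i3 := disk_int (fun x => (1/2) * gradSq u x - 2 * K x * Real.exp (u x)) (by fun_prop)
    have i4 := disk_int (fun x => ε * ((1/2) * gradSq u x + Real.exp (u x) - u x)) (by fun_prop)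
    rw [← integral_const_mul, ← integral_const_mul, ← integral_const_mul, ← integral_sub i1 i2,
      ← integral_add i3 i4]
    apply setIntegral_mono_on (i1.sub i2) (i3.add i4) Metric.isOpen_ball.measurableSet
    intro x hx
    have := hKc x hx
    have h5 : 0 ≤ (-2 * K x + ε) * Real.exp (u x) :=
      mul_nonneg (by linarith) (Real.exp_pos _).le
    simp only [Pi.add_apply, Pi.sub_apply]
    nlinarith
  -- boundary part
  have hbd : 2 * bint u - 4 * M ≤ bint (fun x => 2 * u x - 4 * h x * Real.exp (u x / 2)) := by
    have h4 : 4 * M = 4 * M * bint (fun x => Real.exp (u x / 2)) := by rw [h1, mul_one]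
    rw [h4]
    unfold bint
    rw [← intervalIntegral.integral_const_mul, ← intervalIntegral.integral_const_mul,
      ← intervalIntegral.integral_sub (Continuous.intervalIntegrable (by fun_prop) _ _)
        (Continuous.intervalIntegrable (by fun_prop) _ _)]
    apply intervalIntegral.integral_mono_on (by positivity)
      (Continuous.intervalIntegrable (by fun_prop) _ _)
      (Continuous.intervalIntegrable (by
        show Continuous fun θ => 2 * u (bpt θ) - 4 * h (bpt θ) * Real.exp (u (bpt θ) / 2)
        exact (continuous_const.mul (huc.comp hbc)).sub ((continuous_const.mul hhc).mul
          (Real.continuous_exp.comp ((huc.comp hbc).div_const 2)))) _ _)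
    intro θ hθ
    have h5 : h (bpt θ) ≤ M := (le_abs_self _).trans (hM θ hθ)
    have h6 := mul_le_mul_of_nonneg_right h5 (Real.exp_pos (u (bpt θ) / 2)).le
    linarith
  unfold Ieps Ifun
  rw [le_div_iff₀ (by linarith)]
  set E := ∫ x in unitDisk, gradSq u x
  set m := ∫ x in unitDisk, u x
  set b := bint u
  have e1 : -ε * (b / 2 - V / 4 - E / 4) ≤ -ε * m :=
    mul_le_mul_of_nonneg_left (by linarith) (by linarith)
  have e2 : (2 - ε/2) * (-L - E/8) ≤ (2 - ε/2) * b :=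
    mul_le_mul_of_nonneg_left (by linarith) (by linarith)
  have e3 : 0 ≤ (1/20 + (13/16 - 1/5) * ε) * E := mul_nonneg (by linarith) hE0
  have e4 : 0 ≤ (1 + ε/2) * L := mul_nonneg (by linarith) hL0
  have e5 : 0 ≤ (1 + ε/4) * V := mul_nonneg (by linarith) hV0
  have e6 : 0 ≤ (1 + 2*ε) * (3 * L + V + 4 * M) := mul_nonneg (by linarith) (by positivity)
  nlinarith

end
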